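/- Let F be a bounded standard set-valued map and T > 0. Define Λ : C([0,T], ℝ^m) ⇒ C([0,T], ℝ^m) by: y ∈ Λ(z) iff there is an integrable h : [0,T] → ℝ^m with h(u) ∈ F(z(u)) for all u ∈ [0,T] and y(τ) = z(0) + ∫_0^τ h(u) du for all τ ∈ [0,T]. Then Λ has nonempty images and its graph is closed: if z_n → z and y_n → y uniformly on [0,T] with y_n ∈ Λ(z_n) for all n, then y ∈ Λ(z). -/

import Mathlib

open MeasureTheory Filter Topology Metric Set Pointwise

noncomputable section

/-- `ℝ^m` with the Euclidean norm. -/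
abbrev Euc (m : ℕ) := EuclideanSpace ℝ (Fin m)

/-- A standard set-valued map `F : ℝ^m ⇒ ℝ^m`: nonempty compact convex values,
closed graph, and linear growth. -/
def IsStandardSVM {m : ℕ} (F : Euc m → Set (Euc m)) : Prop :=
  (∀ x, (F x).Nonempty ∧ IsCompact (F x) ∧ Convex ℝ (F x)) ∧
  IsClosed {p : Euc m × Euc m | p.2 ∈ F p.1} ∧
  ∃ c > 0, ∀ x, ∀ z ∈ F x, ‖z‖ ≤ c * (1 + ‖x‖)

/-- A solution of the differential inclusion `dx/dt ∈ F x`: an absolutely continuous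
curve `z : ℝ → ℝ^m` (written as the integral of a locally integrable derivative `h`)
with `h t ∈ F (z t)` for almost every `t`. -/
def IsSolution {m : ℕ} (F : Euc m → Set (Euc m)) (z : ℝ → Euc m) : Prop :=
  Continuous z ∧ ∃ h : ℝ → Euc m,
    (∀ a b : ℝ, IntervalIntegrable h volume a b) ∧
    (∀ᵐ t ∂volume, h t ∈ F (z t)) ∧
    ∀ t : ℝ, z t = z 0 + ∫ u in (0:ℝ)..t, h u

/-- `Φ_t(x)`: the set of points reached at time `t` by solutions starting at `x`. -/
def PhiT {m : ℕ} (F : Euc m → Set (Euc m)) (t : ℝ) (x : Euc m) : Set (Euc m) :=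
  {y | ∃ z : ℝ → Euc m, IsSolution F z ∧ z 0 = x ∧ z t = y}

/-- `ω_Φ(x) = ⋂_{t ≥ 0} closure (Φ_{[t,∞)}(x))`. -/
def omegaLimitSV {m : ℕ} (F : Euc m → Set (Euc m)) (x : Euc m) : Set (Euc m) :=
  ⋂ t ∈ Ici (0:ℝ), closure {y | ∃ s ≥ t, y ∈ PhiT F s x}

/-- An attractor for the set-valued dynamical system induced by `F`: a nonempty,
compact, invariant set admitting a neighborhood `U` with `Φ_t(U) ⊆ N^ε(A)` for all
`t` large enough. -/
def IsAttractorSV {m : ℕ} (F : Euc m → Set (Euc m)) (A : Set (Euc m)) : Prop :=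
  A.Nonempty ∧ IsCompact A ∧
  (∀ x ∈ A, ∃ z : ℝ → Euc m, IsSolution F z ∧ z 0 = x ∧ Set.range z ⊆ A) ∧
  ∃ U : Set (Euc m), IsOpen U ∧ A ⊆ U ∧
    ∀ ε > 0, ∃ tε > 0, ∀ t ≥ tε, ∀ x ∈ U, PhiT F t x ⊆ Metric.thickening ε A

/-- The basin of attraction `B(A) = {x | ω_Φ(x) ⊆ A}`. -/
def basinSV {m : ℕ} (F : Euc m → Set (Euc m)) (A : Set (Euc m)) : Set (Euc m) :=
  {x | omegaLimitSV F x ⊆ A}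

/-- The limit set `L(X) = ⋂_{t ≥ 0} closure {X s : s ≥ t}` of a path. -/
def limitSet {m : ℕ} (X : ℝ → Euc m) : Set (Euc m) :=
  ⋂ t ∈ Ici (0:ℝ), closure {y | ∃ s ≥ t, X s = y}

/-- `inf_{z ∈ S_Φ} sup_{u ∈ [0,T]} ‖z u - Y u‖`. -/
def distToSol {m : ℕ} (F : Euc m → Set (Euc m)) (Y : ℝ → Euc m) (T : ℝ) : ℝ :=
  sInf {d | ∃ z : ℝ → Euc m, IsSolution F z ∧ d = ⨆ u : Icc (0:ℝ) T, ‖z u - Y u‖}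

/-- Asymptotic pseudotrajectory of the set-valued dynamical system induced by `F`. -/
def IsAPT {m : ℕ} (F : Euc m → Set (Euc m)) (X : ℝ → Euc m) : Prop :=
  ∀ T > 0, Tendsto (fun t => distToSol F (fun u => X (t + u)) T) atTop (𝓝 0)

/-- A point `p` is attainable by the process `X`: for every `t > 0` and every
neighborhood `U` of `p`, `P(∃ s ≥ t, X s ∈ U) > 0`. -/
def Attainable {m : ℕ} {Ω : Type*} [MeasurableSpace Ω] (μ : Measure Ω)
    (X : ℝ → Ω → Euc m) (p : Euc m) : Prop :=
  ∀ t > 0, ∀ U ∈ 𝓝 p, 0 < μ {ω | ∃ s ≥ t, X s ω ∈ U}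

/-- `τ_n = γ_1 + ⋯ + γ_n`. -/
def tauOf (γ : ℕ → ℝ) (n : ℕ) : ℝ := ∑ i ∈ Finset.range n, γ (i + 1)

/-- `m(t) = sup {j | τ_j ≤ t}`. -/
def mIdx (γ : ℕ → ℝ) (t : ℝ) : ℕ := sSup {j | tauOf γ j ≤ t}

/-- Hypothesis H1: there is `w t α T` decreasing to `0` in `t` dominating the
conditional probability that `sup_{s ≥ t} inf_{z ∈ S_Φ} sup_{u ∈ [0,T]} ‖z u − X (s+u)‖ ≥ α`. -/
def HypH1 {m : ℕ} {Ω : Type*} [MeasurableSpace Ω] (μ : Measure Ω)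
    (𝓕 : ℝ → MeasurableSpace Ω) (F : Euc m → Set (Euc m)) (X : ℝ → Ω → Euc m) : Prop :=
  ∃ w : ℝ → ℝ → ℝ → ℝ,
    (∀ α > 0, ∀ T > 0, Antitone (fun t => w t α T) ∧ Tendsto (fun t => w t α T) atTop (𝓝 0)) ∧
    ∀ α > 0, ∀ T > 0, ∀ t : ℝ, ∀ᵐ ω ∂μ,
      (μ[Set.indicator {ω' | α ≤ ⨆ s : Ici t, distToSol F (fun u => X ((s : ℝ) + u) ω') T}
          (fun _ => (1:ℝ)) | 𝓕 t]) ω ≤ w t α T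

/-- `F^δ(x) = {y | ∃ z ∈ B(x,δ), dist(y, F z) < δ}`, with the convention `F^0 = F`. -/
def Fdelta {m : ℕ} (F : Euc m → Set (Euc m)) (δ : ℝ) (x : Euc m) : Set (Euc m) :=
  if δ = 0 then F x
  else {y | ∃ z : Euc m, dist z x < δ ∧ Metric.infDist y (F z) < δ}

/-- A `(δ(·), V(·))`-perturbed solution of `dx/dt ∈ F x`. -/
def IsPerturbedSolution {m : ℕ} (F : Euc m → Set (Euc m)) (δ : ℝ → ℝ) (V : ℝ → Euc m)
    (y : ℝ → Euc m) : Prop :=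
  Continuous y ∧ (∀ t > 0, 0 < δ t) ∧ Antitone δ ∧ Tendsto δ atTop (𝓝 0) ∧
  (∀ a b : ℝ, IntervalIntegrable V volume a b) ∧
  (∀ T > 0, Tendsto (fun t => ⨆ u : Icc (0:ℝ) T, ‖∫ r in t..(t + (u : ℝ)), V r‖)
    atTop (𝓝 0)) ∧
  ∃ h : ℝ → Euc m, (∀ a b : ℝ, IntervalIntegrable h volume a b) ∧
    (∀ᵐ t ∂(volume.restrict (Ioi (0:ℝ))), h t - V t ∈ Fdelta F (δ t) (y t)) ∧
    ∀ t ∈ Ici (0:ℝ), y t = y 0 + ∫ u in (0:ℝ)..t, h u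

/-- `Δ(n,T) = sup_{n < k ≤ m(τ_n + T)} ‖∑_{i=n}^{k-1} γ_{i+1} U_{i+1}‖`. -/
def DeltaNT {m : ℕ} {Ω : Type*} (γ : ℕ → ℝ) (U : ℕ → Ω → Euc m) (T : ℝ) (n : ℕ)
    (ω : Ω) : ℝ :=
  ⨆ k : {k : ℕ // n < k ∧ k ≤ mIdx γ (tauOf γ n + T)},
    ‖∑ i ∈ Finset.Ico n (k : ℕ), γ (i + 1) • U (i + 1) ω‖

/-- Condition (bruit2): the conditional probability that `sup_{m ≥ n} Δ(m,T) ≥ ε` is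
dominated by some `w n ε T` decreasing to `0` in `n`. -/
def Bruit2 {m : ℕ} {Ω : Type*} [MeasurableSpace Ω] (μ : Measure Ω)
    (𝓕 : ℕ → MeasurableSpace Ω) (γ : ℕ → ℝ) (U : ℕ → Ω → Euc m) : Prop :=
  ∃ w : ℕ → ℝ → ℝ → ℝ,
    (∀ ε > 0, ∀ T > 0, Antitone (fun n => w n ε T) ∧ Tendsto (fun n => w n ε T) atTop (𝓝 0)) ∧
    ∀ ε > 0, ∀ T > 0, ∀ n : ℕ, ∀ᵐ ω ∂μ,
      (μ[Set.indicator {ω' | ε ≤ ⨆ k : Ici n, DeltaNT γ U T (k : ℕ) ω'}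
          (fun _ => (1:ℝ)) | 𝓕 n]) ω ≤ w n ε T

/-- Topological `limsup` of a sequence of sets: points whose every neighborhood
meets infinitely many of the sets. -/
def setLimsup {X : Type*} [TopologicalSpace X] (A : ℕ → Set X) : Set X :=
  {y | ∀ U ∈ 𝓝 y, {n | (U ∩ A n).Nonempty}.Infinite}

/-- The operator `Λ^δ` on continuous paths `[0,T] → ℝ^m` (with `Λ^0 = Λ`). -/
def LambdaD {m : ℕ} (F : Euc m → Set (Euc m)) (T : ℝ) (hT : 0 ≤ T) (δ : ℝ)
    (z : C(Icc (0:ℝ) T, Euc m)) : Set C(Icc (0:ℝ) T, Euc m) :=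
  {y | ∃ h : ℝ → Euc m, IntervalIntegrable h volume 0 T ∧
    (∀ u : Icc (0:ℝ) T, h u ∈ Fdelta F δ (z u)) ∧
    ∀ τ : Icc (0:ℝ) T, y τ = z ⟨0, Set.left_mem_Icc.mpr hT⟩ + ∫ u in (0:ℝ)..(τ : ℝ), h u}

/-- `Φ^T(M) = closure (⋃_{s ∈ [0,T]} Φ_s(M))`. -/
def PhiTM {m : ℕ} (F : Euc m → Set (Euc m)) (T : ℝ) (M : Set (Euc m)) : Set (Euc m) :=
  closure (⋃ s ∈ Icc (0:ℝ) T, ⋃ x ∈ M, PhiT F s x)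

/-- `‖F‖ = sup_{x ∈ Φ^T(M)} sup_{y ∈ F x} ‖y‖`. -/
def normF {m : ℕ} (F : Euc m → Set (Euc m)) (T : ℝ) (M : Set (Euc m)) : ℝ :=
  sSup {r | ∃ x ∈ PhiTM F T M, ∃ y ∈ F x, r = ‖y‖}

/-- `K_C`: Lipschitz paths with constant `‖F‖ + C + 1` starting in `M`. -/
def KC {m : ℕ} (F : Euc m → Set (Euc m)) (T : ℝ) (hT : 0 ≤ T) (M : Set (Euc m))
    (C : ℝ) : Set C(Icc (0:ℝ) T, Euc m) :=
  {y | (∀ u v : Icc (0:ℝ) T, ‖y u - y v‖ ≤ (normF F T M + C + 1) * |(u : ℝ) - (v : ℝ)|) ∧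
    y ⟨0, Set.left_mem_Icc.mpr hT⟩ ∈ M}

/-- `S_{[0,T]}`: restrictions to `[0,T]` of solutions starting in `M`. -/
def SolRestrict {m : ℕ} (F : Euc m → Set (Euc m)) (T : ℝ) (M : Set (Euc m)) :
    Set C(Icc (0:ℝ) T, Euc m) :=
  {y | ∃ z : ℝ → Euc m, IsSolution F z ∧ z 0 ∈ M ∧ ∀ u : Icc (0:ℝ) T, y u = z u}

/-- A generalised stochastic approximation process relative to `F`. -/
def IsGSAP {m : ℕ} {Ω : Type*} [MeasurableSpace Ω] (μ : Measure Ω)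
    (F : Euc m → Set (Euc m)) (M : Set (Euc m)) (γ : ℕ → ℝ)
    (Fn : ℕ → Euc m → Set (Euc m)) (U : ℕ → Ω → Euc m) (x : ℕ → Ω → Euc m) : Prop :=
  (∀ n, 0 < γ n) ∧
  Tendsto (fun n => ∑ i ∈ Finset.range n, γ (i + 1)) atTop atTop ∧
  Tendsto γ atTop (𝓝 0) ∧
  (∃ C, ∀ n ω, ‖U n ω‖ ≤ C) ∧
  (∀ n ω, x (n + 1) ω - x n ω - γ (n + 1) • U (n + 1) ω ∈ γ (n + 1) • Fn n (x n ω)) ∧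
  (∀ T > 0, ∀ᵐ ω ∂μ, Tendsto
    (fun n => ⨆ k : {k : ℕ // ∑ i ∈ Finset.Ico n k, γ i ≤ T},
      ‖∑ i ∈ Finset.Ico n (k : ℕ), γ (i + 1) • U (i + 1) ω‖) atTop (𝓝 0)) ∧
  (∀ n ω, x n ω ∈ M) ∧
  (∀ δ > 0, ∃ n₀ : ℕ, ∀ n ≥ n₀, ∀ ω, Fn n (x n ω) ⊆ Fdelta F δ (x n ω))

lemma aux_usc {m : ℕ} {F : Euc m → Set (Euc m)}
    (hcl : IsClosed {p : Euc m × Euc m | p.2 ∈ F p.1}) {B : ℝ}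
    (hB : ∀ x, ∀ y ∈ F x, ‖y‖ ≤ B) (x₀ : Euc m) {η : ℝ} (hη : 0 < η) :
    ∃ ε > 0, ∀ x, dist x x₀ < ε → F x ⊆ cthickening η (F x₀) := by
  by_contra hcon
  push Not at hcon
  have hs : ∀ n : ℕ, ∃ p : Euc m × Euc m, dist p.1 x₀ < 1 / ((n : ℝ) + 1) ∧ p.2 ∈ F p.1 ∧
      p.2 ∉ cthickening η (F x₀) := by
    intro n
    obtain ⟨x, hx, hsub⟩ := hcon (1 / ((n : ℝ) + 1)) (by positivity)
    obtain ⟨w, hw, hw'⟩ := not_subset.1 hsub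
    exact ⟨(x, w), hx, hw, hw'⟩
  choose p hp1 hp2 hp3 using hs
  have hlim : Tendsto (fun n => (p n).1) atTop (𝓝 x₀) := by
    rw [tendsto_iff_dist_tendsto_zero]
    exact squeeze_zero (fun _ => dist_nonneg) (fun n => (hp1 n).le)
      tendsto_one_div_add_atTop_nhds_zero_nat
  have hK : IsCompact (closedBall (0 : Euc m) B) := isCompact_closedBall _ _
  obtain ⟨w, -, φ, hφ, hw⟩ := hK.tendsto_subseq (x := fun n => (p n).2)
    (fun n => by simpa using hB _ _ (hp2 n))
  have hpair : Tendsto (fun n => p (φ n)) atTop (𝓝 (x₀, w)) :=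
    (hlim.comp hφ.tendsto_atTop).prodMk_nhds hw
  have hwF : w ∈ F x₀ :=
    hcl.mem_of_tendsto hpair (Eventually.of_forall fun n => hp2 (φ n))
  have : ∀ᶠ n in atTop, (p (φ n)).2 ∈ thickening η (F x₀) :=
    hw.eventually (isOpen_thickening.mem_nhds (self_subset_thickening hη _ hwF))
  obtain ⟨n, hn⟩ := this.exists
  exact hp3 _ (thickening_subset_cthickening _ _ hn)

lemma aux_ftc {m : ℕ} {Y : ℝ → Euc m} {K : NNReal} (hY : LipschitzWith K Y) {T : ℝ} :
    (∀ a b, IntervalIntegrable (deriv Y) volume a b) ∧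
      ∀ τ ∈ uIcc 0 T, Y τ = Y 0 + ∫ u in (0:ℝ)..τ, deriv Y u := by
  have hbd : ∀ u, ‖deriv Y u‖ ≤ K := fun u => norm_deriv_le_of_lipschitz hY
  have hint : ∀ a b, IntervalIntegrable (deriv Y) volume a b := by
    intro a b
    refine (intervalIntegrable_const (c := (K : ℝ))).mono_fun
      (aestronglyMeasurable_deriv _ _) (Eventually.of_forall fun u => ?_)
    simpa using hbd u
  refine ⟨hint, ?_⟩
  have hI : LipschitzWith K (fun x => ∫ u in (0:ℝ)..x, deriv Y u) := by
    refine LipschitzWith.of_dist_le_mul fun a b => ?_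
    rw [dist_eq_norm, intervalIntegral.integral_interval_sub_left (hint _ _) (hint _ _),
      dist_eq_norm, Real.norm_eq_abs]
    exact intervalIntegral.norm_integral_le_of_norm_le_const fun x _ => hbd x
  have hg : AbsolutelyContinuousOnInterval (fun x => Y x - ∫ u in (0:ℝ)..x, deriv Y u) 0 T :=
    ((hY.sub hI).lipschitzOnWith (s := uIcc 0 T)).absolutelyContinuousOnInterval
  obtain ⟨C, hC⟩ := hg.const_of_ae_hasDerivAt_zero (by
    filter_upwards [hY.ae_differentiableAt_real, (hint 0 T).ae_hasDerivAt_integral] with x h1 h2 hx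
    have h3 := h1.hasDerivAt.sub (h2 hx 0 left_mem_uIcc)
    rw [sub_self] at h3
    exact h3)
  intro τ hτ
  have h1 := hC τ hτ
  have h0 := hC 0 left_mem_uIcc
  simp only [intervalIntegral.integral_same, sub_zero] at h0
  rw [h0, ← h1]; abel

lemma aux_core {m : ℕ} {F : Euc m → Set (Euc m)} (hF : IsStandardSVM F) {B : ℝ}
    (hB : ∀ x, ∀ y ∈ F x, ‖y‖ ≤ B) {T : ℝ} (hT : 0 < T) {l : Filter ℕ} [l.NeBot]
    {z : ℝ → Euc m} (hz : Continuous z) {y : ℝ → Euc m} {H Z : ℕ → ℝ → Euc m}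
    (hH : ∀ n, IntervalIntegrable (H n) volume 0 T)
    (hHF : ∀ n, ∀ u ∈ Icc 0 T, H n u ∈ F (Z n u))
    (hZ : ∀ ε > 0, ∀ᶠ n in l, ∀ u ∈ Icc 0 T, dist (Z n u) (z u) < ε)
    (hy : ∀ τ ∈ Icc 0 T, Tendsto (fun n => ∫ u in (0:ℝ)..τ, H n u) l (𝓝 (y τ))) :
    ∃ h : ℝ → Euc m, IntervalIntegrable h volume 0 T ∧ (∀ u ∈ Icc 0 T, h u ∈ F (z u)) ∧
      ∀ τ ∈ Icc 0 T, y τ = ∫ u in (0:ℝ)..τ, h u := by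
  classical
  obtain ⟨hval, hcl, -⟩ := hF
  have hB0 : 0 ≤ B := by
    obtain ⟨w, hw⟩ := (hval 0).1
    exact (norm_nonneg w).trans (hB _ _ hw)
  have hsub : ∀ n, ∀ a ∈ Icc 0 T, ∀ b ∈ Icc 0 T, IntervalIntegrable (H n) volume a b := by
    intro n a ha b hb
    refine (hH n).mono_set ?_
    rw [uIcc_of_le hT.le]
    exact uIcc_subset_Icc ha hb
  have hdiff : ∀ a ∈ Icc 0 T, ∀ b ∈ Icc 0 T,
      Tendsto (fun n => ∫ u in a..b, H n u) l (𝓝 (y b - y a)) := by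
    intro a ha b hb
    refine ((hy b hb).sub (hy a ha)).congr fun n => ?_
    exact intervalIntegral.integral_interval_sub_left
      (hsub n 0 ⟨le_rfl, hT.le⟩ b hb) (hsub n 0 ⟨le_rfl, hT.le⟩ a ha)
  have hy0 : y 0 = 0 := by
    refine tendsto_nhds_unique (hy 0 ⟨le_rfl, hT.le⟩) ?_
    simp
  have hlip : ∀ a ∈ Icc 0 T, ∀ b ∈ Icc 0 T, ‖y b - y a‖ ≤ B * |b - a| := by
    intro a ha b hb
    refine le_of_tendsto (hdiff a ha b hb).norm (Eventually.of_forall fun n => ?_)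
    refine intervalIntegral.norm_integral_le_of_norm_le_const fun x hx => hB _ _ (hHF n x ?_)
    exact uIcc_subset_Icc ha hb (uIoc_subset_uIcc hx)
  set Y : ℝ → Euc m := fun t => y (projIcc 0 T hT.le t) with hYdef
  have hYy : ∀ t ∈ Icc 0 T, Y t = y t := fun t ht => by
    simp only [hYdef, projIcc_of_mem hT.le ht]
  have hYlip : LipschitzWith ⟨B, hB0⟩ Y := by
    refine LipschitzWith.of_dist_le_mul fun a b => ?_
    have h1 := hlip _ (projIcc 0 T hT.le b).2 _ (projIcc 0 T hT.le a).2
    have h2 := (LipschitzWith.projIcc hT.le).dist_le_mul a b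
    rw [Subtype.dist_eq, Real.dist_eq] at h2
    simp only [NNReal.coe_one, one_mul] at h2
    rw [dist_eq_norm]
    exact h1.trans (mul_le_mul_of_nonneg_left h2 hB0)
  obtain ⟨hdint, hftc⟩ := aux_ftc hYlip (T := T)
  have hmem : ∀ u ∈ Ioo 0 T, DifferentiableAt ℝ Y u → deriv Y u ∈ F (z u) := by
    intro u hu hd
    have huI : u ∈ Icc 0 T := Ioo_subset_Icc_self hu
    have hclF : IsClosed (F (z u)) := (hval (z u)).2.1.isClosed
    rw [← hclF.closure_eq, closure_eq_iInter_cthickening]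
    simp only [mem_iInter]
    intro η hη
    obtain ⟨ε, hε, hus⟩ := aux_usc hcl hB (z u) hη
    obtain ⟨δ, hδ, hzδ⟩ := Metric.continuous_iff.1 hz u (ε / 2) (by positivity)
    have hslope := (hasDerivAt_iff_tendsto_slope.1 hd.hasDerivAt).mono_left
      (nhdsWithin_mono u (fun v (hv : v ∈ Ioi u) => ne_of_gt hv))
    refine isClosed_cthickening.mem_of_tendsto hslope ?_
    have hv1 : ∀ᶠ v in 𝓝[>] u, v ∈ Ioo u (min (u + δ) T) :=
      Ioo_mem_nhdsGT (lt_min (by linarith) hu.2)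
    filter_upwards [hv1] with v hv
    have hvδ : v < u + δ := hv.2.trans_le (min_le_left _ _)
    have hvT : v < T := hv.2.trans_le (min_le_right _ _)
    have hvI : v ∈ Icc 0 T := ⟨hu.1.le.trans hv.1.le, hvT.le⟩
    rw [slope_def_module, hYy v hvI, hYy u huI]
    refine isClosed_cthickening.mem_of_tendsto ((hdiff u huI v hvI).const_smul (v - u)⁻¹) ?_
    filter_upwards [hZ (ε / 2) (by positivity)] with n hn
    rw [← interval_average_eq, uIoc_of_le hv.1.le]
    refine ((hval (z u)).2.2.cthickening η).set_average_mem isClosed_cthickening ?_ ?_ ?_ ?_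
    · simp [hv.1]
    · simp
    · refine (ae_restrict_iff' measurableSet_Ioc).2 (Eventually.of_forall fun s hs => ?_)
      have hsI : s ∈ Icc 0 T := ⟨hu.1.le.trans hs.1.le, hs.2.trans hvT.le⟩
      refine hus _ ?_ (hHF n s hsI)
      have h1 := hn s hsI
      have h2 := hzδ s (by rw [Real.dist_eq, abs_lt]; constructor <;> linarith [hs.1, hs.2])
      linarith [dist_triangle (Z n s) (z s) (z u)]
    · exact (intervalIntegrable_iff_integrableOn_Ioc_of_le hv.1.le).1 (hsub n u huI v hvI)
  choose sel hsel using fun x => (hval x).1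
  set h : ℝ → Euc m := fun u => if deriv Y u ∈ F (z u) then deriv Y u else sel (z u) with hh
  have hae : ∀ᵐ u, u ∈ Icc 0 T → h u = deriv Y u := by
    have e1 : ∀ᵐ u : ℝ, u ≠ 0 := by simp [ae_iff, measure_singleton]
    have e2 : ∀ᵐ u : ℝ, u ≠ T := by simp [ae_iff, measure_singleton]
    filter_upwards [hYlip.ae_differentiableAt_real, e1, e2] with u h1 h2 h3 hu
    have := hmem u ⟨lt_of_le_of_ne hu.1 (Ne.symm h2), lt_of_le_of_ne hu.2 h3⟩ h1
    simp [hh, this]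
  refine ⟨h, ?_, ?_, ?_⟩
  · refine (hdint 0 T).congr_ae ?_
    refine (ae_restrict_iff' measurableSet_uIoc).2 ?_
    filter_upwards [hae] with u hu hu'
    rw [uIoc_of_le hT.le] at hu'
    exact (hu (Ioc_subset_Icc_self hu')).symm
  · intro u _
    by_cases hc : deriv Y u ∈ F (z u)
    · simpa [hh, hc] using hc
    · simpa [hh, hc] using hsel (z u)
  · intro τ hτ
    have h1 := hftc τ (by rwa [uIcc_of_le hT.le])
    rw [hYy τ hτ, hYy 0 ⟨le_rfl, hT.le⟩, hy0, zero_add] at h1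
    rw [h1]
    refine intervalIntegral.integral_congr_ae ?_
    filter_upwards [hae] with u hu hu'
    rw [uIoc_of_le hτ.1] at hu'
    exact (hu ⟨hu'.1.le, hu'.2.trans hτ.2⟩).symm

/-- For a bounded standard `F`, the operator `Λ = Λ^0` on
`C([0,T], ℝ^m)` has nonempty images and closed graph: if `z_n → z` and `y_n → y`
uniformly with `y_n ∈ Λ(z_n)`, then `y ∈ Λ(z)`. -/
theorem Lambda_nonempty_and_closed
    {m : ℕ} (F : Euc m → Set (Euc m)) (hF : IsStandardSVM F)
    (hFbdd : ∃ B : ℝ, ∀ x, ∀ y ∈ F x, ‖y‖ ≤ B)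
    (T : ℝ) (hT : 0 < T) :
    (∀ z : C(Icc (0:ℝ) T, Euc m), (LambdaD F T hT.le 0 z).Nonempty) ∧
    (∀ (zn yn : ℕ → C(Icc (0:ℝ) T, Euc m)) (z y : C(Icc (0:ℝ) T, Euc m)),
      Tendsto zn atTop (𝓝 z) → Tendsto yn atTop (𝓝 y) →
      (∀ n, yn n ∈ LambdaD F T hT.le 0 (zn n)) →
      y ∈ LambdaD F T hT.le 0 z) := by
  obtain ⟨B, hB⟩ := hFbdd
  have h0I : (0:ℝ) ∈ Icc 0 T := ⟨le_rfl, hT.le⟩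
  constructor
  · intro z
    choose sel hsel using fun x => (hF.1 x).1
    set ze : ℝ → Euc m := fun t => z (projIcc 0 T hT.le t) with hze
    have hzec : Continuous ze := z.continuous.comp continuous_projIcc
    have hzeu : UniformContinuous ze :=
      (CompactSpace.uniformContinuous_of_continuous z.continuous).comp
        (LipschitzWith.projIcc hT.le).uniformContinuous
    set Z : ℕ → ℝ → Euc m := fun n u => ze ((⌊((n:ℝ) + 1) * u⌋ : ℝ) / ((n:ℝ) + 1)) with hZdef
    set H : ℕ → ℝ → Euc m := fun n u => sel (Z n u) with hHdef
    have hHb : ∀ n u, ‖H n u‖ ≤ B := fun n u => hB _ _ (hsel _)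
    have hmeas : ∀ n, Measurable (H n) := by
      intro n
      have h1 : Measurable (fun k : ℤ => sel (ze ((k : ℝ) / ((n:ℝ) + 1)))) :=
        measurable_from_top
      exact h1.comp (Int.measurable_floor.comp (measurable_id.const_mul ((n:ℝ) + 1)))
    have hint : ∀ n a b, IntervalIntegrable (H n) volume a b := by
      intro n a b
      refine (intervalIntegrable_const (c := B)).mono_fun
        (hmeas n).aestronglyMeasurable (Eventually.of_forall fun u => ?_)
      exact (hHb n u).trans (le_abs_self B)
    let l : Ultrafilter ℕ := Ultrafilter.of atTop
    have hl : (l : Filter ℕ) ≤ atTop := Ultrafilter.of_le atTop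
    have hlim : ∀ τ : ℝ, ∃ w, Tendsto (fun n => ∫ u in (0:ℝ)..τ, H n u) l (𝓝 w) := by
      intro τ
      obtain ⟨w, -, hw⟩ := (isCompact_closedBall (0 : Euc m) (B * |τ - 0|)).ultrafilter_le_nhds
        (l.map fun n => ∫ u in (0:ℝ)..τ, H n u) (by
          rw [le_principal_iff]
          refine Filter.mem_map.2 (Filter.univ_mem' fun n => ?_)
          simp only [mem_preimage, mem_closedBall_zero_iff]
          exact intervalIntegral.norm_integral_le_of_norm_le_const fun x _ => hHb n x)
      exact ⟨w, hw⟩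
    choose y hy using hlim
    obtain ⟨h, hhint, hhF, -⟩ := aux_core hF hB hT (l := (l : Filter ℕ)) hzec
      (fun n => hint n 0 T) (fun n u _ => hsel _) (Z := Z) (y := y) (by
        intro ε hε
        obtain ⟨δ, hδ, hd⟩ := Metric.uniformContinuous_iff.1 hzeu ε hε
        have h1 : ∀ᶠ n : ℕ in atTop, 1 / ((n:ℝ) + 1) < δ :=
          tendsto_one_div_add_atTop_nhds_zero_nat.eventually (gt_mem_nhds hδ)
        filter_upwards [hl h1] with n hn u _
        refine hd (lt_of_le_of_lt ?_ hn)
        have hn0 : (0:ℝ) < (n:ℝ) + 1 := by positivity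
        have e1 := Int.floor_le (((n:ℝ) + 1) * u)
        have e2 := Int.lt_floor_add_one (((n:ℝ) + 1) * u)
        have e3 : (⌊((n:ℝ) + 1) * u⌋ : ℝ) / ((n:ℝ) + 1) - u =
          ((⌊((n:ℝ) + 1) * u⌋ : ℝ) - ((n:ℝ) + 1) * u) / ((n:ℝ) + 1) := by
          field_simp
        rw [Real.dist_eq, e3, abs_div, abs_of_pos hn0]
        refine div_le_div_of_nonneg_right ?_ hn0.le
        rw [abs_le]; constructor <;> linarith) (fun τ _ => hy τ)
    have hcont : ContinuousOn (fun τ => ∫ u in (0:ℝ)..τ, h u) (Icc 0 T) := by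
      have := intervalIntegral.continuousOn_primitive_interval' hhint left_mem_uIcc
      rwa [uIcc_of_le hT.le] at this
    refine ⟨⟨fun τ => z ⟨0, h0I⟩ + ∫ u in (0:ℝ)..(τ : ℝ), h u,
      continuous_const.add (continuousOn_iff_continuous_restrict.1 hcont)⟩, h, hhint, ?_, ?_⟩
    · intro u
      have := hhF u u.2
      simpa [Fdelta, hze] using this
    · intro τ; rfl
  · intro zn yn z y hzn hyn hmem
    choose H hHint hHF hHy using hmem
    set ze : ℝ → Euc m := fun t => z (projIcc 0 T hT.le t) with hze
    have hzec : Continuous ze := z.continuous.comp continuous_projIcc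
    obtain ⟨h, hhint, hhF, hhy⟩ := aux_core hF hB hT (l := (atTop : Filter ℕ)) hzec
      (y := fun t => y (projIcc 0 T hT.le t) - z ⟨0, h0I⟩) hHint
      (Z := fun n t => zn n (projIcc 0 T hT.le t)) (by
        intro n u hu
        have := hHF n ⟨u, hu⟩
        simpa [Fdelta, projIcc_of_mem hT.le hu] using this) (by
        intro ε hε
        filter_upwards [Metric.tendsto_nhds.1 hzn ε hε] with n hn u _
        exact (ContinuousMap.dist_apply_le_dist _).trans_lt hn) (by
        intro τ hτ
        have hc : ∀ t : Icc (0:ℝ) T, Continuous fun f : C(Icc (0:ℝ) T, Euc m) => f t :=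
          fun t => continuous_eval_const t
        have e1 := ((hc ⟨τ, hτ⟩).tendsto y).comp hyn
        have e2 := ((hc ⟨0, h0I⟩).tendsto z).comp hzn
        have e3 := e1.sub e2
        simp only [projIcc_of_mem hT.le hτ]
        refine e3.congr fun n => ?_
        have := hHy n ⟨τ, hτ⟩
        simp only [Function.comp_apply, this, add_sub_cancel_left])
    refine ⟨h, hhint, ?_, ?_⟩
    · intro u
      have := hhF u u.2
      simpa [Fdelta, hze] using this
    · intro τ
      have := hhy τ τ.2
      simp only [projIcc_val] at this
      rw [← this]; abel
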